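/- arXiv:2002.04346 — 2 statements merged into one kernel-verified Lean document; each statement's English description precedes it below -/
import Mathlib

section
/- Let b(z) = p(z) s(z) f(z) be a Wiener–Hopf factorisation of an n×n real polynomial matrix b with partial indices of type (κ,k), κ ≥ 0, 0 ≤ k < n (so s(z) = diag(z^{κ+1},…,z^{κ+1},z^{κ},…,z^{κ}) with the first k entries z^{κ+1}), where f(z) = f₀ + f₁z⁻¹ + ⋯ + f_{κ+1}z^{−κ−1} and, if k > 0, the last n−k rows of f_{κ+1} are zero (f_{κ+1} = 0 if k = 0). Then the polynomial det b(z) ∈ ℝ[z] has exactly nκ + k roots (counted with multiplicity, over ℂ) in the open unit disk |z| < 1, no roots with |z| = 1, and its remaining deg(det b) − (nκ + k) roots satisfy |z| > 1. -/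
open Polynomial Matrix

/-- Evaluation of a real polynomial matrix at a complex point (entrywise). -/
noncomputable def evalMat {n : ℕ} (M : Matrix (Fin n) (Fin n) (Polynomial ℝ)) (z : ℂ) :
    Matrix (Fin n) (Fin n) ℂ :=
  M.map (fun r => Polynomial.aeval z r)

/-- A polynomial matrix viewed as a matrix over the field of real rational functions. -/
noncomputable def polyToRat {n : ℕ} (M : Matrix (Fin n) (Fin n) (Polynomial ℝ)) :
    Matrix (Fin n) (Fin n) (RatFunc ℝ) :=
  M.map (algebraMap (Polynomial ℝ) (RatFunc ℝ))

/-- The rational matrix F(1/z) obtained from a polynomial matrix F by substituting 1/z. -/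
noncomputable def invSub {n : ℕ} (F : Matrix (Fin n) (Fin n) (Polynomial ℝ)) :
    Matrix (Fin n) (Fin n) (RatFunc ℝ) :=
  F.map (fun r => Polynomial.aeval ((RatFunc.X : RatFunc ℝ)⁻¹) r)

/-- The diagonal matrix diag(z^{κ₁},…,z^{κₙ}) over ℝ(z). -/
noncomputable def sMat (n : ℕ) (κ : Fin n → ℤ) : Matrix (Fin n) (Fin n) (RatFunc ℝ) :=
  Matrix.diagonal (fun i => (RatFunc.X : RatFunc ℝ) ^ (κ i))

/-- `IsWHF b p F κ` : b(z) = p(z) · diag(z^{κᵢ}) · F(1/z) is a Wiener–Hopf factorisation. -/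
structure IsWHF {n : ℕ} (b p F : Matrix (Fin n) (Fin n) (Polynomial ℝ))
    (κ : Fin n → ℤ) : Prop where
  p_noZero : ∀ z : ℂ, ‖z‖ ≤ 1 → (evalMat p z).det ≠ 0
  F_noZero : ∀ w : ℂ, ‖w‖ ≤ 1 → (evalMat F w).det ≠ 0
  anti : ∀ i j : Fin n, i ≤ j → κ j ≤ κ i
  eq : polyToRat b = polyToRat p * sMat n κ * invSub F

/-- Partial indices of type (κ,k): the first k indices equal κ+1, the rest κ. -/
def idx (n : ℕ) (κ k : ℕ) : Fin n → ℤ := fun i => if (i : ℕ) < k then (κ : ℤ) + 1 else (κ : ℤ)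

open scoped Classical

/-!
Taking determinants turns the factorisation into the scalar identity `b = p · z ^ N · g(1/z)`,
where `N` is the sum of the partial indices and `p`, `g` are zero-free on the closed unit disk.
With `d = deg g`, clearing denominators gives `z ^ d · b = z ^ N · p · ĝ`, where `ĝ` is the reverse
`z ^ d · g(1/z)` of `g`. Since `g(0) ≠ 0`, the reverse has degree `d`, and its roots, the inverses
of those of `g`, all lie in the open disk. Counting the roots of both sides in the open disk gives
`d + #(b) = N + 0 + d`, hence `#(b) = N`.
-/

section PolynomialRoots

variable {K : Type*} [NormedField K]

/-- The number of roots of a polynomial in the open unit disk, counted with multiplicity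
(`0` for the zero polynomial, whose `roots` are empty). -/
noncomputable def innerRootCount (q : K[X]) : ℕ :=
  (q.roots.filter fun z => ‖z‖ < 1).card

theorem innerRootCount_mul {p q : K[X]} (hpq : p * q ≠ 0) :
    innerRootCount (p * q) = innerRootCount p + innerRootCount q := by
  simp only [innerRootCount, roots_mul hpq, Multiset.filter_add, Multiset.card_add]

theorem innerRootCount_X_pow (m : ℕ) : innerRootCount (X ^ m : K[X]) = m := by
  have hroots : ∀ z ∈ (X ^ m : K[X]).roots, ‖z‖ < 1 := by
    intro z hz
    rw [roots_X_pow] at hz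
    simp [Multiset.mem_singleton.mp (Multiset.mem_of_mem_nsmul hz)]
  rw [innerRootCount, Multiset.filter_eq_self.mpr hroots, roots_X_pow, Multiset.card_nsmul,
    Multiset.card_singleton, mul_one]

theorem innerRootCount_eq_zero {q : K[X]} (hq : ∀ z : K, ‖z‖ < 1 → q.eval z ≠ 0) :
    innerRootCount q = 0 := by
  rw [innerRootCount, Multiset.card_eq_zero, Multiset.filter_eq_nil]
  exact fun z hz hlt => hq z hlt (isRoot_of_mem_roots hz)

theorem innerRootCount_eq_natDegree [IsAlgClosed K] {q : K[X]}
    (hq : ∀ z : K, 1 ≤ ‖z‖ → q.eval z ≠ 0) : innerRootCount q = q.natDegree := by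
  rw [innerRootCount, Multiset.filter_eq_self.mpr fun z hz =>
    not_le.mp fun hle => hq z hle (isRoot_of_mem_roots hz)]
  exact IsAlgClosed.card_roots_eq_natDegree

theorem innerRootCount_add_card_roots_filter_one_lt_norm [IsAlgClosed K] {q : K[X]}
    (hq : ∀ z ∈ q.roots, ‖z‖ ≠ 1) :
    innerRootCount q + (q.roots.filter fun z => 1 < ‖z‖).card = q.natDegree := by
  have houter : (q.roots.filter fun z => 1 < ‖z‖) = q.roots.filter fun z => ¬ ‖z‖ < 1 :=
    Multiset.filter_congr fun z hz => by
      rw [not_lt, le_iff_lt_or_eq, or_iff_left (hq z hz).symm]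
  rw [innerRootCount, houter, ← Multiset.card_add, Multiset.filter_add_not]
  exact IsAlgClosed.card_roots_eq_natDegree

theorem eval_reverse_ne_zero {g : K[X]} (hg : ∀ z : K, ‖z‖ ≤ 1 → g.eval z ≠ 0) {z : K}
    (hz : 1 ≤ ‖z‖) : g.reverse.eval z ≠ 0 := by
  have hz0 : z ≠ 0 := norm_pos_iff.mp (one_pos.trans_le hz)
  let _ : Invertible z⁻¹ := invertibleOfNonzero (inv_ne_zero hz0)
  have hiff := eval₂_reverse_eq_zero_iff (RingHom.id K) z⁻¹ g
  rw [invOf_eq_inv, inv_inv] at hiff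
  exact hiff.not.mpr (hg z⁻¹ (norm_inv z ▸ inv_le_one_of_one_le₀ hz))

theorem innerRootCount_reverse [IsAlgClosed K] {g : K[X]}
    (hg : ∀ z : K, ‖z‖ ≤ 1 → g.eval z ≠ 0) : innerRootCount g.reverse = g.natDegree := by
  have hg0 : g.coeff 0 ≠ 0 := coeff_zero_eq_eval_zero g ▸ hg 0 (by simp)
  rw [innerRootCount_eq_natDegree fun z hz => eval_reverse_ne_zero hg hz, reverse_natDegree,
    natTrailingDegree_eq_zero.mpr (Or.inr hg0), Nat.sub_zero]

section Factorization

variable {b p g : K[X]} {l m : ℕ} (hp : ∀ z : K, ‖z‖ ≤ 1 → p.eval z ≠ 0)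
  (hg : ∀ z : K, ‖z‖ ≤ 1 → g.eval z ≠ 0)
  (h : X ^ (g.natDegree + m) * b = X ^ l * (p * g.reverse))

include hp hg h

theorem eval_ne_zero_of_X_pow_mul_eq {z : K} (hz : ‖z‖ = 1) : b.eval z ≠ 0 := by
  have hz0 : z ≠ 0 := norm_ne_zero_iff.mp (hz ▸ one_ne_zero)
  refine right_ne_zero_of_mul (a := z ^ (g.natDegree + m)) ?_
  have heval := congrArg (eval z) h
  simp only [eval_mul, eval_pow, eval_X] at heval
  rw [heval]
  exact mul_ne_zero (pow_ne_zero l hz0) (mul_ne_zero (hp z hz.le) (eval_reverse_ne_zero hg hz.ge))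

theorem innerRootCount_add_of_X_pow_mul_eq [IsAlgClosed K] : innerRootCount b + m = l := by
  have hb0 : b ≠ 0 := by
    rintro rfl
    exact eval_ne_zero_of_X_pow_mul_eq hp hg h norm_one eval_zero
  have hlhs : X ^ (g.natDegree + m) * b ≠ 0 := mul_ne_zero (pow_ne_zero _ X_ne_zero) hb0
  have hrhs : X ^ l * (p * g.reverse) ≠ 0 := h ▸ hlhs
  have hcount := congrArg innerRootCount h
  rw [innerRootCount_mul hlhs, innerRootCount_mul hrhs,
    innerRootCount_mul (right_ne_zero_of_mul hrhs), innerRootCount_X_pow, innerRootCount_X_pow,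
    innerRootCount_eq_zero fun z hz => hp z hz.le, innerRootCount_reverse hg] at hcount
  omega

end Factorization

end PolynomialRoots

theorem reverse_map_of_injective {R S : Type*} [Semiring R] [Semiring S] {φ : R →+* S}
    (hφ : Function.Injective φ) (q : R[X]) : (q.map φ).reverse = q.reverse.map φ := by
  rw [reverse, reverse, natDegree_map_eq_of_injective hφ, reflect_map]

theorem prod_zpow_eq_zpow_sum₀ {ι G : Type*} [CommGroupWithZero G] {x : G} (hx : x ≠ 0)
    (s : Finset ι) (e : ι → ℤ) : ∏ i ∈ s, x ^ e i = x ^ ∑ i ∈ s, e i := by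
  induction s using Finset.induction_on with
  | empty => simp
  | insert i s hi ih => rw [Finset.prod_insert hi, Finset.sum_insert hi, ih, zpow_add₀ hx]

section RationalFunctions

variable {k : Type*} [Field k]

theorem algebraMap_reverse_eq_X_pow_mul_aeval_inv (g : k[X]) :
    algebraMap k[X] (RatFunc k) g.reverse =
      RatFunc.X ^ g.natDegree * aeval (RatFunc.X : RatFunc k)⁻¹ g := by
  let _ : Invertible (RatFunc.X : RatFunc k)⁻¹ :=
    invertibleOfNonzero (inv_ne_zero RatFunc.X_ne_zero)
  have hrev := eval₂_reverse_mul_pow (algebraMap k (RatFunc k)) RatFunc.X⁻¹ g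
  rw [invOf_eq_inv, inv_inv, ← aeval_def, ← aeval_def, ← RatFunc.algebraMap_X,
    aeval_algebraMap_apply, aeval_X_left_apply, RatFunc.algebraMap_X] at hrev
  rw [← hrev, inv_pow, mul_left_comm, mul_inv_cancel₀ (pow_ne_zero _ RatFunc.X_ne_zero), mul_one]

theorem X_pow_mul_eq_of_algebraMap_eq {b p g : k[X]} {e : ℤ}
    (h : algebraMap k[X] (RatFunc k) b =
      algebraMap k[X] (RatFunc k) p * RatFunc.X ^ e * aeval (RatFunc.X : RatFunc k)⁻¹ g) :
    X ^ (g.natDegree + (-e).toNat) * b = X ^ e.toNat * (p * g.reverse) := by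
  apply IsFractionRing.injective k[X] (RatFunc k)
  have hpow : (RatFunc.X : RatFunc k) ^ (-e).toNat * RatFunc.X ^ e = RatFunc.X ^ e.toNat := by
    rw [← zpow_natCast, ← zpow_natCast, ← zpow_add₀ RatFunc.X_ne_zero]
    congr 1
    omega
  simp only [map_mul, map_pow, RatFunc.algebraMap_X, h, algebraMap_reverse_eq_X_pow_mul_aeval_inv]
  rw [← hpow]
  ring

end RationalFunctions

section Determinants

variable {n : ℕ}

theorem det_evalMat (M : Matrix (Fin n) (Fin n) ℝ[X]) (z : ℂ) :
    (evalMat M z).det = (M.det.map (algebraMap ℝ ℂ)).eval z := by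
  rw [eval_map_algebraMap]
  exact ((aeval z).map_det M).symm

theorem det_polyToRat (M : Matrix (Fin n) (Fin n) ℝ[X]) :
    (polyToRat M).det = algebraMap ℝ[X] (RatFunc ℝ) M.det :=
  ((algebraMap ℝ[X] (RatFunc ℝ)).map_det M).symm

theorem det_invSub (M : Matrix (Fin n) (Fin n) ℝ[X]) :
    (invSub M).det = aeval (RatFunc.X : RatFunc ℝ)⁻¹ M.det :=
  ((aeval (RatFunc.X : RatFunc ℝ)⁻¹).map_det M).symm

theorem det_sMat (κ : Fin n → ℤ) : (sMat n κ).det = RatFunc.X ^ ∑ i, κ i := by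
  rw [sMat, det_diagonal, prod_zpow_eq_zpow_sum₀ RatFunc.X_ne_zero]

end Determinants

theorem sum_idx {n k : ℕ} (hkn : k ≤ n) (κ : ℕ) : ∑ i, idx n κ k i = ((n * κ + k : ℕ) : ℤ) := by
  have hidx (i : Fin n) : idx n κ k i = κ + if (i : ℕ) < k then 1 else 0 := by
    unfold idx
    split_ifs <;> simp
  simp only [hidx, Finset.sum_add_distrib, Finset.sum_boole, Fin.card_filter_val_lt]
  simp [hkn]

namespace IsWHF

variable {n : ℕ} {b p F : Matrix (Fin n) (Fin n) ℝ[X]} {κ : Fin n → ℤ}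

theorem algebraMap_det_eq (h : IsWHF b p F κ) :
    algebraMap ℝ[X] (RatFunc ℝ) b.det =
      algebraMap ℝ[X] (RatFunc ℝ) p.det * RatFunc.X ^ (∑ i, κ i) *
        aeval (RatFunc.X : RatFunc ℝ)⁻¹ F.det := by
  rw [← det_polyToRat, h.eq, det_mul, det_mul, det_polyToRat, det_sMat, det_invSub]

theorem eval_det_left_ne_zero (h : IsWHF b p F κ) (z : ℂ) (hz : ‖z‖ ≤ 1) :
    (p.det.map (algebraMap ℝ ℂ)).eval z ≠ 0 :=
  det_evalMat p z ▸ h.p_noZero z hz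

theorem eval_det_right_ne_zero (h : IsWHF b p F κ) (w : ℂ) (hw : ‖w‖ ≤ 1) :
    (F.det.map (algebraMap ℝ ℂ)).eval w ≠ 0 :=
  det_evalMat F w ▸ h.F_noZero w hw

theorem X_pow_mul_det_eq (h : IsWHF b p F κ) :
    X ^ ((F.det.map (algebraMap ℝ ℂ)).natDegree + (-∑ i, κ i).toNat) *
        b.det.map (algebraMap ℝ ℂ) =
      X ^ (∑ i, κ i).toNat *
        (p.det.map (algebraMap ℝ ℂ) * (F.det.map (algebraMap ℝ ℂ)).reverse) := by
  have hmap := congrArg (Polynomial.map (algebraMap ℝ ℂ))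
    (X_pow_mul_eq_of_algebraMap_eq h.algebraMap_det_eq)
  simpa only [Polynomial.map_mul, Polynomial.map_pow, map_X, natDegree_map,
    reverse_map_of_injective (algebraMap ℝ ℂ).injective] using hmap

theorem norm_ne_one_of_mem_roots_det (h : IsWHF b p F κ) :
    ∀ z ∈ (b.det.map (algebraMap ℝ ℂ)).roots, ‖z‖ ≠ 1 := fun _ hz hnorm =>
  eval_ne_zero_of_X_pow_mul_eq h.eval_det_left_ne_zero h.eval_det_right_ne_zero
    h.X_pow_mul_det_eq hnorm (isRoot_of_mem_roots hz)

theorem innerRootCount_det (h : IsWHF b p F κ) :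
    (innerRootCount (b.det.map (algebraMap ℝ ℂ)) : ℤ) = ∑ i, κ i := by
  have hcount := innerRootCount_add_of_X_pow_mul_eq h.eval_det_left_ne_zero
    h.eval_det_right_ne_zero h.X_pow_mul_det_eq
  omega

end IsWHF

theorem stmt12_general {n : ℕ} {b p F : Matrix (Fin n) (Fin n) ℝ[X]} {κ : Fin n → ℤ}
    (h : IsWHF b p F κ) :
    ((((b.det.map (algebraMap ℝ ℂ)).roots.filter fun z => ‖z‖ < 1).card : ℤ) = ∑ i, κ i) ∧
    (∀ z ∈ (b.det.map (algebraMap ℝ ℂ)).roots, ‖z‖ ≠ 1) ∧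
    ((((b.det.map (algebraMap ℝ ℂ)).roots.filter fun z => 1 < ‖z‖).card : ℤ) =
      (b.det.map (algebraMap ℝ ℂ)).natDegree - ∑ i, κ i) := by
  refine ⟨h.innerRootCount_det, h.norm_ne_one_of_mem_roots_det, ?_⟩
  rw [← h.innerRootCount_det, ← innerRootCount_add_card_roots_filter_one_lt_norm
    h.norm_ne_one_of_mem_roots_det, Nat.cast_add, add_sub_cancel_left]

/-- a WHF with partial indices of type (κ,k) pins down the number of
determinantal roots of b inside the unit circle as nκ + k; none lie on the circle and
the remaining deg(det b) - (nκ + k) lie outside. -/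
theorem stmt12 {n κ k : ℕ} (hkn : k < n)
    (b p F : Matrix (Fin n) (Fin n) (Polynomial ℝ))
    (hWHF : IsWHF b p F (idx n κ k))
    (hFdeg : ∀ i j : Fin n, (F i j).degree ≤ ((κ + 1 : ℕ) : WithBot ℕ))
    (hFlast : ∀ i j : Fin n, k ≤ (i : ℕ) → (F i j).coeff (κ + 1) = 0) :
    (((b.det.map (algebraMap ℝ ℂ)).roots.filter fun z => ‖z‖ < 1).card = n * κ + k) ∧
    (∀ z ∈ (b.det.map (algebraMap ℝ ℂ)).roots, ‖z‖ ≠ 1) ∧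
    (((b.det.map (algebraMap ℝ ℂ)).roots.filter fun z => 1 < ‖z‖).card =
      (b.det.map (algebraMap ℝ ℂ)).natDegree - (n * κ + k)) := by
  obtain ⟨hinner, hcircle, houter⟩ := sum_idx hkn.le κ ▸ stmt12_general hWHF
  exact ⟨by exact_mod_cast hinner, hcircle, by omega⟩
end

section
/- Let a(z) = I_n − a₁z − ⋯ − a_p z^p and b(z) = b₀ + b₁z + ⋯ + b_q z^q be n×n real polynomial matrices and let u₁ ∈ ℝ^{n×n}, u₁ ≠ 0, satisfy u₁ a_p = 0 and u₁ b_q = 0. Set ũ(z) = I_n + u₁ z, ã(z) = ũ(z) a(z), and b̃(z) = ũ(z) b(z). Then every entry of ã has degree at most p with ã(0) = I_n, every entry of b̃ has degree at most q, (ã, b̃) ≠ (a, b) whenever u₁(a(z),b(z)) is not identically zero, and ã(z)^{−1} b̃(z) = a(z)^{−1} b(z) as matrices over the field of real rational functions (both inverses exist in ℝ(z)^{n×n} since det a(0) = det ã(0) = 1). -/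
open Polynomial Matrix

/-!
The coefficient of `z ^ (k + 1)` in `ũ(z) c(z)` is `c_{k+1} + u₁ c_k`, so the product exceeds degree
`d` only through `u₁ c_d`, which is assumed to vanish; for the same reason the product differs from
`c` unless `u₁ c(z) = 0`. As `ũ(0) = I`, the determinant of `ũ` has constant coefficient `1`, so `ũ`
is invertible over the rational functions and cancels from `(ũ a)⁻¹ (ũ b)`.
-/

/-- The matrix of coefficients of `z ^ k` in a polynomial matrix `c(z)`. -/
def coeffMatrix {m n R : Type*} [Semiring R] (k : ℕ) (c : Matrix m n R[X]) : Matrix m n R :=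
  c.map fun r => r.coeff k

/-- The linear polynomial matrix `ũ(z) = I + u z` by which a VARMA realisation is premultiplied. -/
noncomputable def linearFactor {n R : Type*} [DecidableEq n] [Semiring R] (u : Matrix n n R) :
    Matrix n n R[X] :=
  1 + u.map fun r => C r * X

section Coefficients

variable {m n R : Type*} [Semiring R]

theorem forall_degree_le_iff_coeffMatrix_eq_zero {c : Matrix m n R[X]} {d : ℕ} :
    (∀ i j, (c i j).degree ≤ d) ↔ ∀ k, d < k → coeffMatrix k c = 0 := by
  simp only [degree_le_iff_coeff_zero, Nat.cast_lt, ← Matrix.ext_iff, coeffMatrix, map_apply,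
    Matrix.zero_apply]
  exact ⟨fun h k hk i j => h i j k hk, fun h i j k hk => h k hk i j⟩

theorem coeffMatrix_zero_linearFactor [DecidableEq n] (u : Matrix n n R) :
    coeffMatrix 0 (linearFactor u) = 1 := by
  ext i j
  simp [linearFactor, coeffMatrix, one_apply, apply_ite (coeff · 0)]

variable [Fintype n]

theorem coeffMatrix_map_C_mul (k : ℕ) (u : Matrix n n R) (c : Matrix n m R[X]) :
    coeffMatrix k (u.map C * c) = u * coeffMatrix k c := by
  ext i j
  simp [coeffMatrix, mul_apply, finsetSum_coeff]

variable [DecidableEq n]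

theorem linearFactor_mul (u : Matrix n n R) (c : Matrix n m R[X]) :
    linearFactor u * c = c + (X : R[X]) • (u.map C * c) := by
  have map_C_mul_X : (u.map fun r => C r * X) = (X : R[X]) • u.map C := by
    ext1 i j
    exact (X_mul_C (u i j)).symm
  rw [linearFactor, Matrix.add_mul, Matrix.one_mul, map_C_mul_X, Matrix.smul_mul]

theorem coeffMatrix_zero_linearFactor_mul (u : Matrix n n R) (c : Matrix n m R[X]) :
    coeffMatrix 0 (linearFactor u * c) = coeffMatrix 0 c := by
  ext i j
  simp [linearFactor_mul, coeffMatrix]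

theorem coeffMatrix_succ_linearFactor_mul (k : ℕ) (u : Matrix n n R) (c : Matrix n m R[X]) :
    coeffMatrix (k + 1) (linearFactor u * c) = coeffMatrix (k + 1) c + u * coeffMatrix k c := by
  rw [← coeffMatrix_map_C_mul, linearFactor_mul]
  ext i j
  simp [coeffMatrix]

theorem degree_linearFactor_mul_le {u : Matrix n n R} {c : Matrix n m R[X]} {d : ℕ}
    (hc : ∀ i j, (c i j).degree ≤ d) (hu : u * coeffMatrix d c = 0) :
    ∀ i j, ((linearFactor u * c) i j).degree ≤ d := by
  rw [forall_degree_le_iff_coeffMatrix_eq_zero] at hc ⊢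
  rintro (_ | k) hk
  · exact absurd hk d.not_lt_zero
  have u_mul_coeff : u * coeffMatrix k c = 0 := by
    rcases (Nat.lt_succ_iff.mp hk).eq_or_lt with rfl | hdk
    · exact hu
    · rw [hc k hdk, Matrix.mul_zero]
  rw [coeffMatrix_succ_linearFactor_mul, hc (k + 1) hk, u_mul_coeff, add_zero]

theorem linearFactor_mul_eq_self_iff {S : Type*} [Ring S] {u : Matrix n n S}
    {c : Matrix n m S[X]} : linearFactor u * c = c ↔ u.map C * c = 0 := by
  rw [linearFactor_mul, add_eq_left]
  simp [← Matrix.ext_iff]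

end Coefficients

section Inverse

variable {m n R F : Type*} [Fintype n] [DecidableEq n] [CommRing R] [CommRing F]

theorem coeff_zero_det (c : Matrix n n R[X]) : c.det.coeff 0 = (coeffMatrix 0 c).det :=
  RingHom.map_det constantCoeff c

theorem isUnit_det_map_of_coeffMatrix_zero_eq_one [Algebra R[X] F] [IsFractionRing R[X] F]
    {c : Matrix n n R[X]} (hc : coeffMatrix 0 c = 1) :
    IsUnit (c.map (algebraMap R[X] F)).det := by
  have det_mem : c.det ∈ nonZeroDivisors R[X] := by
    refine mem_nonzeroDivisors_of_coeff_mem 0 ?_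
    rw [coeff_zero_det, hc, det_one]
    exact one_mem _
  have isUnit_map := IsLocalization.map_units F ⟨c.det, det_mem⟩
  rwa [RingHom.map_det, RingHom.mapMatrix_apply] at isUnit_map

theorem inv_mul_mul_mul_of_isUnit_det {u : Matrix n n F} (hu : IsUnit u.det) (a : Matrix n n F)
    (b : Matrix n m F) : (u * a)⁻¹ * (u * b) = a⁻¹ * b := by
  rw [Matrix.mul_inv_rev, Matrix.mul_assoc, nonsing_inv_mul_cancel_left u b hu]

theorem inv_mul_map_linearFactor_mul [Algebra R[X] F] [IsFractionRing R[X] F] (u : Matrix n n R)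
    (a : Matrix n n R[X]) (b : Matrix n m R[X]) :
    ((linearFactor u * a).map (algebraMap R[X] F))⁻¹ *
        (linearFactor u * b).map (algebraMap R[X] F) =
      (a.map (algebraMap R[X] F))⁻¹ * b.map (algebraMap R[X] F) := by
  rw [Matrix.map_mul, Matrix.map_mul]
  exact inv_mul_mul_mul_of_isUnit_det
    (isUnit_det_map_of_coeffMatrix_zero_eq_one (coeffMatrix_zero_linearFactor u)) _ _

end Inverse

theorem stmt15_general {m n R F : Type*} [Fintype n] [DecidableEq n] [CommRing R] [CommRing F]
    [Algebra R[X] F] [IsFractionRing R[X] F] {p q : ℕ}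
    (a : Matrix n n R[X]) (b : Matrix n m R[X]) (u₁ : Matrix n n R)
    (hadeg : ∀ i j, (a i j).degree ≤ p) (ha0 : coeffMatrix 0 a = 1)
    (hbdeg : ∀ i j, (b i j).degree ≤ q)
    (huap : u₁ * coeffMatrix p a = 0) (hubq : u₁ * coeffMatrix q b = 0) :
    (∀ i j, ((linearFactor u₁ * a) i j).degree ≤ p) ∧
    coeffMatrix 0 (linearFactor u₁ * a) = 1 ∧
    (∀ i j, ((linearFactor u₁ * b) i j).degree ≤ q) ∧
    ((u₁.map C * a ≠ 0 ∨ u₁.map C * b ≠ 0) →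
      ¬(linearFactor u₁ * a = a ∧ linearFactor u₁ * b = b)) ∧
    ((linearFactor u₁ * a).map (algebraMap R[X] F))⁻¹ *
        (linearFactor u₁ * b).map (algebraMap R[X] F) =
      (a.map (algebraMap R[X] F))⁻¹ * b.map (algebraMap R[X] F) := by
  refine ⟨degree_linearFactor_mul_le hadeg huap,
    (coeffMatrix_zero_linearFactor_mul u₁ a).trans ha0,
    degree_linearFactor_mul_le hbdeg hubq, ?_, inv_mul_map_linearFactor_mul u₁ a b⟩
  rw [linearFactor_mul_eq_self_iff, linearFactor_mul_eq_self_iff, not_and_or]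
  exact id

/-- premultiplication by ũ(z) = I + u₁z with u₁aₚ = 0, u₁b_q = 0 yields
another VARMA(p,q) realisation of the same transfer function. -/
theorem stmt15 {n p q : ℕ}
    (a b : Matrix (Fin n) (Fin n) (Polynomial ℝ)) (u₁ : Matrix (Fin n) (Fin n) ℝ)
    (hadeg : ∀ i j, (a i j).degree ≤ (p : WithBot ℕ))
    (ha0 : a.map (fun r => r.coeff 0) = (1 : Matrix (Fin n) (Fin n) ℝ))
    (hbdeg : ∀ i j, (b i j).degree ≤ (q : WithBot ℕ))
    (hu1 : u₁ ≠ 0)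
    (huap : u₁ * a.map (fun r => r.coeff p) = 0)
    (hubq : u₁ * b.map (fun r => r.coeff q) = 0) :
    letI u : Matrix (Fin n) (Fin n) (Polynomial ℝ) :=
      (1 : Matrix (Fin n) (Fin n) (Polynomial ℝ)) +
        u₁.map (fun r => Polynomial.C r * Polynomial.X)
    letI ta : Matrix (Fin n) (Fin n) (Polynomial ℝ) := u * a
    letI tb : Matrix (Fin n) (Fin n) (Polynomial ℝ) := u * b
    (∀ i j, (ta i j).degree ≤ (p : WithBot ℕ)) ∧
    ta.map (fun r => r.coeff 0) = (1 : Matrix (Fin n) (Fin n) ℝ) ∧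
    (∀ i j, (tb i j).degree ≤ (q : WithBot ℕ)) ∧
    ((u₁.map Polynomial.C * a ≠ 0 ∨ u₁.map Polynomial.C * b ≠ 0) →
      ¬(ta = a ∧ tb = b)) ∧
    (polyToRat ta)⁻¹ * polyToRat tb = (polyToRat a)⁻¹ * polyToRat b :=
  stmt15_general a b u₁ hadeg ha0 hbdeg huap hubq
end
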